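/- Let G be a finite simple graph whose vertex set carries a linear order such that |B_t| ≤ r for every vertex t (which holds whenever the order witnesses linear rankwidth at most r). Then for every M ∈ Z, the (r+1)-fold iterate of F satisfies F^{r+1}(M) = ∅. -/

import Mathlib

/-!
A vertex `v` lies in `B_t` exactly when `v ≤ t < τ(v)` (`mem_Bset_iff`), so `B_t ∩ {≤ p}` can only
shrink as `t ≥ p` grows.

When a vertex `v` leaves the active basis at `τ(v)`, it is replaced by `F₀(v) ⊆ B_{τ(v)}`, all of
whose elements are smaller than `v` (`F0_lt`). Dropping the single coordinate `s` lowers the rank by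
at most one, so distinct members of a common `B_t` have distinct `τ`-values (`tau_inj`). Hence, for
`M ∈ Z` nonempty, `F(M) ⊆ B_{τ(M)}` (`Fmap_step`).

After the first application of `F` one is left with a subset of `B_s`, where `s = τ(M)`, which has at
most `r` elements. From then on all sets stay inside `{≤ s}`, and each further application, at
`s' = τ(M')` say, takes a subset of `B_t ∩ {≤ s}` to a subset of `B_{s'} ∩ {≤ s}`, a strictly smaller
set because the removed vertex is missing from it. So `r` further applications reach `∅`
(`iterate_of_card_le`).
-/

open scoped Classical symmDiff

variable {V : Type}

/-- `N^{>t}(v)`: the neighbors of `v` that are greater than `t`. -/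
def Ngt (G : SimpleGraph V) [LT V] (t v : V) : Set V := {w | G.Adj v w ∧ t < w}

/-- `N_⊕(M)`: the symmetric difference `⊕_{v ∈ M} N(v)` of the neighborhoods of the
vertices of `M`, i.e. the set of vertices adjacent to an odd number of elements of `M`. -/
noncomputable def NSym (G : SimpleGraph V) (M : Finset V) : Set V :=
  {w | Odd (M.filter (fun v => G.Adj v w)).card}

/-- `N_⊕^{>t}(M) = N_⊕(M) ∩ V^{>t}`. -/
noncomputable def NSymGt (G : SimpleGraph V) [LT V] (t : V) (M : Finset V) : Set V :=
  NSym G M ∩ {w | t < w}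

/-- The active basis `B_t`: the set of vertices `v ≤ t` such that `N^{>t}(v)` is not the
symmetric difference of the `N^{>t}`-neighborhoods of a set of vertices smaller than `v`. -/
noncomputable def Bset [Fintype V] [LinearOrder V] (G : SimpleGraph V) (t : V) : Finset V :=
  Finset.univ.filter (fun v => v ≤ t ∧
    ¬ ∃ B : Finset V, (∀ b ∈ B, b < v) ∧ Ngt G t v = NSymGt G t B)

/-- `τ(v)`: the least `t ≥ v` with `v ∉ B_t`.  (It exists since `v ∉ B_{max V}`; the
maximum of `V` is inserted only to make the minimum well-defined.) -/
noncomputable def tau [Fintype V] [LinearOrder V] [Nonempty V] (G : SimpleGraph V) (v : V) :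
    V :=
  (insert (Finset.univ.max' Finset.univ_nonempty)
    (Finset.univ.filter (fun t => v ≤ t ∧ v ∉ Bset G t))).min' (Finset.insert_nonempty _ _)

/-- `τ(M) = min_{v ∈ M} τ(v)` for a nonempty finset `M` (junk value for `M = ∅`). -/
noncomputable def tauSet [Fintype V] [LinearOrder V] [Nonempty V] (G : SimpleGraph V)
    (M : Finset V) : V :=
  if h : M.Nonempty then (M.image (tau G)).min' (h.image _)
  else Finset.univ.max' Finset.univ_nonempty

/-- A nonempty set `M` is active if `max M < τ(M)`. -/
def ActiveSet [Fintype V] [LinearOrder V] [Nonempty V] (G : SimpleGraph V) (M : Finset V) :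
    Prop :=
  ∃ h : M.Nonempty, M.max' h < tauSet G M

/-- Membership in the collection `Z`: the empty set, the singletons, and the active sets. -/
def Zmem [Fintype V] [LinearOrder V] [Nonempty V] (G : SimpleGraph V) (M : Finset V) : Prop :=
  M = ∅ ∨ (∃ v : V, M = {v}) ∨ ActiveSet G M

/-- `F₀(v)`: the unique subset `B` of `B_{τ(v)}` with `N^{>τ(v)}(v) = N_⊕^{>τ(v)}(B)`. -/
noncomputable def F0 [Fintype V] [LinearOrder V] [Nonempty V] (G : SimpleGraph V) (v : V) :
    Finset V :=
  if h : ∃ B : Finset V, B ⊆ Bset G (tau G v) ∧ Ngt G (tau G v) v = NSymGt G (tau G v) B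
  then h.choose else ∅

/-- The map `F`: `F(∅) = ∅` and `F(M) = M ∆ {v} ∆ F₀(v)` where `v` is the (for `M ∈ Z`,
unique) element of `M` with `τ(v) = τ(M)`. -/
noncomputable def Fmap [Fintype V] [LinearOrder V] [Nonempty V] (G : SimpleGraph V)
    (M : Finset V) : Finset V :=
  if h : ∃ v ∈ M, tau G v = tauSet G M
  then (M ∆ {h.choose}) ∆ F0 G h.choose
  else ∅

/-- Symmetric difference of neighborhoods is additive over `𝔽₂`. -/
lemma mem_NSym_symmDiff [DecidableEq V] (G : SimpleGraph V) (A B : Finset V) (w : V) :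
    w ∈ NSym G (A ∆ B) ↔ ¬ (w ∈ NSym G A ↔ w ∈ NSym G B) := by
  have h : ((A ∆ B).filter (fun v => G.Adj v w)).card
      + 2 * ((A ∩ B).filter (fun v => G.Adj v w)).card
      = (A.filter (fun v => G.Adj v w)).card + (B.filter (fun v => G.Adj v w)).card := by
    simp only [Finset.card_filter, Finset.mul_sum]
    have h1 : ∀ f : V → ℕ, ∑ x ∈ A ∆ B, f x + ∑ x ∈ A ∩ B, f x = ∑ x ∈ A ∪ B, f x := by
      intro f
      rw [← Finset.sum_union]
      · congr 1; ext x; simp [Finset.mem_symmDiff]; tauto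
      · rw [Finset.disjoint_left]; intro x; simp [Finset.mem_symmDiff]; tauto
    have h2 := Finset.sum_union_inter (s₁ := A) (s₂ := B)
      (f := fun v => if G.Adj v w then 1 else 0)
    rw [← h2, ← h1, ← Finset.mul_sum]
    ring
  simp only [NSym, Set.mem_ofPred_eq, Nat.odd_iff]
  omega

lemma mem_NSym_singleton (G : SimpleGraph V) (v w : V) :
    w ∈ NSym G {v} ↔ G.Adj v w := by
  simp only [NSym, Set.mem_ofPred_eq, Finset.filter_singleton]
  split_ifs with h <;> simp [h]

lemma Ngt_eq_iff [LinearOrder V] (G : SimpleGraph V) (t v : V) (B : Finset V) :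
    Ngt G t v = NSymGt G t B ↔ ∀ w, t < w → w ∉ NSym G (B ∆ {v}) := by
  simp only [Set.ext_iff, Ngt, NSymGt, Set.mem_inter_iff, Set.mem_ofPred_eq, mem_NSym_symmDiff,
    mem_NSym_singleton]
  exact forall_congr' fun w => by tauto

/-- `v ≤ t` is outside `B_t` iff it is the maximum of a set whose neighborhoods sum to zero
above `t`. -/
lemma notMem_Bset_iff [Fintype V] [LinearOrder V] (G : SimpleGraph V) {t v : V} (hv : v ≤ t) :
    v ∉ Bset G t ↔
      ∃ S : Finset V, v ∈ S ∧ (∀ b ∈ S, b ≤ v) ∧ ∀ w, t < w → w ∉ NSym G S := by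
  simp only [Bset, Finset.mem_filter, Finset.mem_univ, true_and, hv, not_not, Ngt_eq_iff]
  constructor
  · rintro ⟨B, hB, h⟩
    refine ⟨B ∆ {v}, ?_, ?_, h⟩
    · have : v ∉ B := fun h => lt_irrefl _ (hB v h)
      simp [Finset.mem_symmDiff, this]
    · intro b hb
      simp only [Finset.mem_symmDiff, Finset.mem_singleton] at hb
      rcases hb with hb | hb
      · exact (hB b hb.1).le
      · exact hb.1.le
  · rintro ⟨S, hvS, hS, h⟩
    refine ⟨S ∆ {v}, ?_, ?_⟩
    · intro b hb
      simp only [Finset.mem_symmDiff, Finset.mem_singleton] at hb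
      rcases hb with hb | hb
      · exact lt_of_le_of_ne (hS b hb.1) hb.2
      · exact absurd (hb.1 ▸ hvS) hb.2
    · rwa [symmDiff_symmDiff_cancel_right]

lemma le_of_mem_Bset [Fintype V] [LinearOrder V] {G : SimpleGraph V} {t v : V}
    (h : v ∈ Bset G t) : v ≤ t := by
  simp only [Bset, Finset.mem_filter] at h
  exact h.2.1

lemma Bset_anti [Fintype V] [LinearOrder V] {G : SimpleGraph V} {s t v : V}
    (hvs : v ≤ s) (hst : s ≤ t) (h : v ∈ Bset G t) : v ∈ Bset G s := by
  by_contra hs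
  obtain ⟨S, h1, h2, h3⟩ := (notMem_Bset_iff G hvs).1 hs
  exact (notMem_Bset_iff G (hvs.trans hst)).2
    ⟨S, h1, h2, fun w hw => h3 w (hst.trans_lt hw)⟩ h

section
variable [Fintype V] [LinearOrder V] [Nonempty V]

lemma tau_spec (G : SimpleGraph V) (v : V) : v ≤ tau G v ∧ v ∉ Bset G (tau G v) := by
  have h := Finset.min'_mem (insert (Finset.univ.max' Finset.univ_nonempty)
    (Finset.univ.filter (fun t => v ≤ t ∧ v ∉ Bset G t))) (Finset.insert_nonempty _ _)
  change tau G v ∈ _ at h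
  rcases Finset.mem_insert.1 h with h | h
  · -- Above the maximum of `V` there is nothing, so `{v}` is a vanishing combination.
    have hmax : ∀ w, w ≤ tau G v := fun w => h ▸ Finset.le_max' _ _ (Finset.mem_univ w)
    exact ⟨hmax v, (notMem_Bset_iff G (hmax v)).2
      ⟨{v}, by simp, by simp, fun w hw => absurd (hmax w) hw.not_ge⟩⟩
  · simpa using h

lemma mem_Bset_iff (G : SimpleGraph V) (t v : V) :
    v ∈ Bset G t ↔ v ≤ t ∧ t < tau G v := by
  constructor
  · intro h
    refine ⟨le_of_mem_Bset h, lt_of_not_ge fun hle => ?_⟩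
    exact (tau_spec G v).2 (Bset_anti (tau_spec G v).1 hle h)
  · rintro ⟨h1, h2⟩
    by_contra h
    refine h2.not_ge (Finset.min'_le _ _ ?_)
    simp [h1, h]

/-- If the vertices `u < v` left the active basis at the same `s`, then the combinations with
maxima `u` and `v` vanishing above `s` would both be supported at `s` alone above the predecessor
of `s`; their sum would vanish there, so `v` would have left earlier. -/
lemma tau_ne_of_lt {G : SimpleGraph V} {t u v : V} (hu : u ∈ Bset G t) (hv : v ∈ Bset G t)
    (huv : u < v) : tau G u ≠ tau G v := by
  intro heq
  rw [mem_Bset_iff] at hu hv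
  obtain ⟨p, hle, hp⟩ := exists_le_covBy_of_lt hv.2
  have hup : u ∈ Bset G p := (mem_Bset_iff G p u).2 ⟨hu.1.trans hle, heq ▸ hp.lt⟩
  have hvp : v ∈ Bset G p := (mem_Bset_iff G p v).2 ⟨hv.1.trans hle, hp.lt⟩
  obtain ⟨A, hA1, hA2, hA3⟩ := (notMem_Bset_iff G (tau_spec G u).1).1 (tau_spec G u).2
  obtain ⟨B, hB1, hB2, hB3⟩ := (notMem_Bset_iff G (tau_spec G v).1).1 (tau_spec G v).2
  rw [heq] at hA3
  have key : ∀ x ∈ Bset G p, ∀ S : Finset V, x ∈ S → (∀ b ∈ S, b ≤ x) →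
      (∀ w, tau G v < w → w ∉ NSym G S) → tau G v ∈ NSym G S := by
    intro x hx S h1 h2 h3
    by_contra h4
    refine (notMem_Bset_iff G (le_of_mem_Bset hx)).2 ⟨S, h1, h2, fun w hw => ?_⟩ hx
    rcases (hp.ge_of_gt hw).eq_or_lt with h | h
    · exact h ▸ h4
    · exact h3 w h
  have hA4 := key u hup A hA1 hA2 hA3
  have hB4 := key v hvp B hB1 hB2 hB3
  have hvA : v ∉ A := fun h => huv.not_ge (hA2 v h)
  have := key v hvp (A ∆ B) (by simp [Finset.mem_symmDiff, hvA, hB1]) (by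
    intro b hb
    rcases Finset.mem_symmDiff.1 hb with h | h
    · exact (hA2 b h.1).trans huv.le
    · exact hB2 b h.1) (by
    intro w hw
    rw [mem_NSym_symmDiff]
    have := hA3 w hw
    have := hB3 w hw
    tauto)
  rw [mem_NSym_symmDiff] at this
  tauto

lemma tau_inj {G : SimpleGraph V} {t u v : V} (hu : u ∈ Bset G t) (hv : v ∈ Bset G t)
    (h : tau G u = tau G v) : u = v := by
  rcases lt_trichotomy u v with huv | huv | huv
  · exact absurd h (tau_ne_of_lt hu hv huv)
  · exact huv
  · exact absurd h.symm (tau_ne_of_lt hv hu huv)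

lemma F0_subset (G : SimpleGraph V) (v : V) : F0 G v ⊆ Bset G (tau G v) := by
  unfold F0
  split_ifs with h
  · exact h.choose_spec.1
  · simp

/-- Otherwise the maximum of `F₀(v)` would be a combination of smaller vertices (`v` among them)
above `τ(v)`, contradicting its membership in the active basis. -/
lemma F0_lt (G : SimpleGraph V) (v : V) : ∀ w ∈ F0 G v, w < v := by
  by_cases h : ∃ B : Finset V, B ⊆ Bset G (tau G v) ∧
      Ngt G (tau G v) v = NSymGt G (tau G v) B
  · have hsub := F0_subset G v
    have heq : Ngt G (tau G v) v = NSymGt G (tau G v) (F0 G v) := by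
      unfold F0
      rw [dif_pos h]
      exact h.choose_spec.2
    rw [Ngt_eq_iff] at heq
    intro w hw
    by_contra hlt
    have hne : (F0 G v).Nonempty := ⟨w, hw⟩
    have hmem := (F0 G v).max'_mem hne
    have hb := hsub hmem
    have hvb : v ≤ (F0 G v).max' hne := (not_lt.1 hlt).trans (Finset.le_max' _ _ hw)
    have hbv : (F0 G v).max' hne ≠ v := by
      intro h
      rw [h] at hb
      exact (tau_spec G v).2 hb
    refine (notMem_Bset_iff G (le_of_mem_Bset hb)).2 ⟨F0 G v ∆ {v}, ?_, ?_, heq⟩ hb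
    · simp [Finset.mem_symmDiff, hmem, hbv]
    · intro b hb'
      simp only [Finset.mem_symmDiff, Finset.mem_singleton] at hb'
      rcases hb' with h | h
      · exact Finset.le_max' _ _ h.1
      · exact h.1.le.trans hvb
  · unfold F0
    rw [dif_neg h]
    simp

lemma Fmap_empty (G : SimpleGraph V) : Fmap G ∅ = ∅ := by simp [Fmap]

lemma tauSet_le {G : SimpleGraph V} {M : Finset V} {w : V} (hw : w ∈ M) :
    tauSet G M ≤ tau G w := by
  unfold tauSet
  rw [dif_pos ⟨w, hw⟩]
  exact Finset.min'_le _ _ (Finset.mem_image_of_mem _ hw)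

lemma exists_tau_eq (G : SimpleGraph V) {M : Finset V} (hM : M.Nonempty) :
    ∃ v ∈ M, tau G v = tauSet G M := by
  unfold tauSet
  rw [dif_pos hM]
  exact Finset.mem_image.1 (Finset.min'_mem (M.image (tau G)) (hM.image _))

/-- One application of `F` to a nonempty set on which `τ` is injective and which lies below its
`τ`-value. -/
lemma Fmap_step (G : SimpleGraph V) {M : Finset V} (hM : M.Nonempty)
    (hinj : ∀ u ∈ M, ∀ v ∈ M, tau G u = tau G v → u = v) (hle : ∀ w ∈ M, w ≤ tauSet G M) :
    ∃ v ∈ M, tau G v = tauSet G M ∧ Fmap G M ⊆ Bset G (tau G v) ∧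
      ∀ w ∈ Fmap G M, w ∈ M ∨ w < v := by
  have h := exists_tau_eq G hM
  obtain ⟨v, hvM, hv, hF⟩ : ∃ v ∈ M, tau G v = tauSet G M ∧
      Fmap G M = (M ∆ {v}) ∆ F0 G v := by
    refine ⟨h.choose, h.choose_spec.1, h.choose_spec.2, ?_⟩
    unfold Fmap
    rw [dif_pos h]
  have hmem : ∀ w ∈ Fmap G M, (w ∈ M ∧ w ≠ v) ∨ w ∈ F0 G v := by
    intro w hw
    rw [hF] at hw
    simp only [Finset.mem_symmDiff, Finset.mem_singleton] at hw
    rcases hw with ⟨⟨h1, h2⟩ | ⟨h1, h2⟩, -⟩ | ⟨h1, -⟩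
    · exact Or.inl ⟨h1, h2⟩
    · exact absurd (h1 ▸ hvM) h2
    · exact Or.inr h1
  refine ⟨v, hvM, hv, fun w hw => ?_, fun w hw => ?_⟩
  · rcases hmem w hw with ⟨h1, h2⟩ | h1
    · rw [mem_Bset_iff, hv]
      refine ⟨hle w h1, lt_of_le_of_ne (tauSet_le h1) fun h3 => ?_⟩
      exact h2 (hinj w h1 _ hvM (h3.symm.trans hv.symm))
    · exact F0_subset G _ h1
  · exact (hmem w hw).imp (fun h => h.1) (F0_lt G _ w)

lemma iterate_empty (G : SimpleGraph V) (k : ℕ) : (Fmap G)^[k] ∅ = ∅ :=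
  Function.iterate_fixed (Fmap_empty G) k

/-- A set contained in `B_s ∩ {≤ p}` with `p ≤ s` is emptied in `|B_s ∩ {≤ p}|` steps, since each
step at least removes one vertex from the set `B_s ∩ {≤ p}`. -/
lemma iterate_of_card_le (G : SimpleGraph V) (p : V) (k : ℕ) :
    ∀ (s : V) (M : Finset V), p ≤ s → M ⊆ (Bset G s).filter (· ≤ p) →
      ((Bset G s).filter (· ≤ p)).card ≤ k → (Fmap G)^[k] M = ∅ := by
  induction k with
  | zero =>
    intro s M _ hM hk
    have h0 := Finset.card_eq_zero.1 (Nat.le_zero.1 hk)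
    rw [h0] at hM
    exact Finset.subset_empty.1 hM
  | succ k ih =>
    intro s M hps hM hk
    rcases M.eq_empty_or_nonempty with rfl | hne
    · exact iterate_empty G _
    have hMB : ∀ w ∈ M, w ∈ Bset G s ∧ w ≤ p := fun w hw => Finset.mem_filter.1 (hM hw)
    obtain ⟨u, hu, hus⟩ := exists_tau_eq G hne
    have hs : s < tauSet G M := hus ▸ ((mem_Bset_iff G s u).1 (hMB u hu).1).2
    obtain ⟨v, hv, hvs, hsub, hlt⟩ := Fmap_step G hne
      (fun a ha b hb => tau_inj (hMB a ha).1 (hMB b hb).1)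
      (fun w hw => (hMB w hw).2.trans (hps.trans hs.le))
    rw [← hvs] at hs
    rw [Function.iterate_succ_apply]
    refine ih (tau G v) _ (hps.trans hs.le) (fun w hw => ?_) ?_
    · refine Finset.mem_filter.2 ⟨hsub hw, ?_⟩
      rcases hlt w hw with h | h
      · exact (hMB w h).2
      · exact h.le.trans (hMB v hv).2
    · refine Nat.le_of_lt_succ (lt_of_lt_of_le (Finset.card_lt_card ?_) hk)
      refine Finset.ssubset_iff_of_subset (fun w hw => ?_) |>.2 ⟨v, hM hv, fun h => ?_⟩
      · obtain ⟨h1, h2⟩ := Finset.mem_filter.1 hw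
        exact Finset.mem_filter.2 ⟨Bset_anti (h2.trans hps) hs.le h1, h2⟩
      · exact (tau_spec G v).2 (Finset.mem_filter.1 h).1

end

/-- If `|B_t| ≤ r` for every `t` (as when the order witnesses linear rankwidth at most `r`),
then `F^{r+1}(M) = ∅` for every `M ∈ Z`. -/
theorem Fmap_iterate_eq_empty [Fintype V] [LinearOrder V] [Nonempty V] (G : SimpleGraph V)
    (r : ℕ) (hB : ∀ t : V, (Bset G t).card ≤ r) (M : Finset V) (hZ : Zmem G M) :
    (Fmap G)^[r + 1] M = ∅ := by
  rcases M.eq_empty_or_nonempty with rfl | hne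
  · exact iterate_empty G _
  have hgood : (∀ u ∈ M, ∀ v ∈ M, tau G u = tau G v → u = v) ∧ ∀ w ∈ M, w ≤ tauSet G M := by
    rcases hZ with h | ⟨x, rfl⟩ | ⟨hne, hact⟩
    · exact absurd h hne.ne_empty
    · obtain ⟨v, hv, hvs⟩ := exists_tau_eq G hne
      rw [← hvs]
      rw [Finset.mem_singleton] at hv
      subst hv
      simpa using (tau_spec G v).1
    · -- An active set is contained in the active basis at its maximum.
      have hmem : ∀ w ∈ M, w ∈ Bset G (M.max' hne) := fun w hw =>
        (mem_Bset_iff G _ w).2 ⟨Finset.le_max' _ _ hw, hact.trans_le (tauSet_le hw)⟩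
      exact ⟨fun a ha b hb => tau_inj (hmem a ha) (hmem b hb),
        fun w hw => (Finset.le_max' _ _ hw).trans hact.le⟩
  obtain ⟨v, -, -, hsub, -⟩ := Fmap_step G hne hgood.1 hgood.2
  rw [Function.iterate_succ_apply]
  exact iterate_of_card_le G (tau G v) r (tau G v) _ le_rfl
    (fun w hw => Finset.mem_filter.2 ⟨hsub hw, le_of_mem_Bset (hsub hw)⟩)
    ((Finset.card_filter_le _ _).trans (hB _))
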